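/- Let H be a quasi-Hopf algebra, B a right H-comodule algebra, and v : H → B a morphism of right H-comodule algebras. Define E : B → B by E(b) = v(q¹)b₍₀₎v(βS(q²b₍₁₎)), set A = E(B), define h▷b = E(v(h)b) for h ∈ H, b ∈ B, and define a*a′ = E(aa′) for a, a′ ∈ A. Then (A, *, 1_B, ▷) is a left H-module algebra, and the map Ψ : A#H → B, Ψ(a#h) = a v(h), is an isomorphism of right H-comodule algebras; in particular B ≅ A#H as right H-comodule algebras. -/

import Mathlib

open TensorProduct BigOperators

/-- A quasi-bialgebra in the sense of Drinfeld. -/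
structure QuasiBialgebra (k H : Type*) [Field k] [Ring H] [Algebra k H] where
  comul : H →ₐ[k] H ⊗[k] H
  counit : H →ₐ[k] k
  Phi : H ⊗[k] (H ⊗[k] H)
  PhiInv : H ⊗[k] (H ⊗[k] H)
  Phi_mul_inv : Phi * PhiInv = 1
  inv_mul_Phi : PhiInv * Phi = 1
  comul_coassoc : ∀ h : H,
    (Algebra.TensorProduct.map (AlgHom.id k H) comul) (comul h)
      = Phi * (Algebra.TensorProduct.assoc k k k H H H)
          ((Algebra.TensorProduct.map comul (AlgHom.id k H)) (comul h)) * PhiInv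
  counit_comul_right : ∀ h : H,
    (Algebra.TensorProduct.map (AlgHom.id k H) counit) (comul h) = h ⊗ₜ[k] (1 : k)
  counit_comul_left : ∀ h : H,
    (Algebra.TensorProduct.map counit (AlgHom.id k H)) (comul h) = (1 : k) ⊗ₜ[k] h
  pentagon :
    ((1 : H) ⊗ₜ[k] Phi)
      * (Algebra.TensorProduct.map (AlgHom.id k H)
          (((Algebra.TensorProduct.assoc k k k H H H).toAlgHom).comp
            (Algebra.TensorProduct.map comul (AlgHom.id k H)))) Phi
      * (Algebra.TensorProduct.map (AlgHom.id k H)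
          (Algebra.TensorProduct.map (AlgHom.id k H)
            (Algebra.TensorProduct.includeLeft : H →ₐ[k] H ⊗[k] H))) Phi
    = (Algebra.TensorProduct.map (AlgHom.id k H)
          (Algebra.TensorProduct.map (AlgHom.id k H) comul)) Phi
      * (Algebra.TensorProduct.assoc k k k H H (H ⊗[k] H))
          ((Algebra.TensorProduct.map comul (AlgHom.id k (H ⊗[k] H))) Phi)
  counit_Phi : (Algebra.TensorProduct.map (AlgHom.id k H)
      (Algebra.TensorProduct.map counit (AlgHom.id k H))) Phi = 1

/-- A quasi-Hopf algebra: a quasi-bialgebra with antipode `S` (a bijective algebra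
anti-automorphism with inverse `Sinv`) and elements `alpha`, `beta`, normalized so that
`counit alpha = counit beta = 1`.  Identities involving Sweedler components are stated
universally over all finite representations of the relevant tensors. -/
structure QuasiHopfAlgebra (k H : Type*) [Field k] [Ring H] [Algebra k H] extends
    QuasiBialgebra k H where
  alpha : H
  beta : H
  S : H →ₗ[k] H
  Sinv : H →ₗ[k] H
  S_one : S 1 = 1
  S_mul : ∀ a b : H, S (a * b) = S b * S a
  Sinv_S : ∀ h : H, Sinv (S h) = h
  S_Sinv : ∀ h : H, S (Sinv h) = h
  antipode_left : ∀ h : H, ∀ (n : ℕ) (d1 d2 : Fin n → H),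
    comul h = ∑ i, d1 i ⊗ₜ[k] d2 i →
    ∑ i, S (d1 i) * alpha * d2 i = counit h • alpha
  antipode_right : ∀ h : H, ∀ (n : ℕ) (d1 d2 : Fin n → H),
    comul h = ∑ i, d1 i ⊗ₜ[k] d2 i →
    ∑ i, d1 i * beta * S (d2 i) = counit h • beta
  antipode_Phi : ∀ (n : ℕ) (X1 X2 X3 : Fin n → H),
    Phi = ∑ i, X1 i ⊗ₜ[k] (X2 i ⊗ₜ[k] X3 i) →
    ∑ i, X1 i * beta * S (X2 i) * alpha * X3 i = 1
  antipode_PhiInv : ∀ (n : ℕ) (x1 x2 x3 : Fin n → H),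
    PhiInv = ∑ i, x1 i ⊗ₜ[k] (x2 i ⊗ₜ[k] x3 i) →
    ∑ i, S (x1 i) * alpha * x2 i * beta * S (x3 i) = 1
  counit_alpha : counit alpha = 1
  counit_beta : counit beta = 1
/-- A right `H`-comodule algebra over a quasi-bialgebra `Q`. -/
structure RightComoduleAlgebra {k H : Type*} [Field k] [Ring H] [Algebra k H]
    (Q : QuasiBialgebra k H) (B : Type*) [Ring B] [Algebra k B] where
  coact : B →ₐ[k] B ⊗[k] H
  PhiRho : B ⊗[k] (H ⊗[k] H)
  PhiRhoInv : B ⊗[k] (H ⊗[k] H)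
  PhiRho_mul_inv : PhiRho * PhiRhoInv = 1
  inv_mul_PhiRho : PhiRhoInv * PhiRho = 1
  coact_coassoc : ∀ b : B,
    PhiRho * (Algebra.TensorProduct.assoc k k k B H H)
        ((Algebra.TensorProduct.map coact (AlgHom.id k H)) (coact b))
      = (Algebra.TensorProduct.map (AlgHom.id k B) Q.comul) (coact b) * PhiRho
  pentagon :
    ((1 : B) ⊗ₜ[k] Q.Phi)
      * (Algebra.TensorProduct.map (AlgHom.id k B)
          (((Algebra.TensorProduct.assoc k k k H H H).toAlgHom).comp
            (Algebra.TensorProduct.map Q.comul (AlgHom.id k H)))) PhiRho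
      * (Algebra.TensorProduct.map (AlgHom.id k B)
          (Algebra.TensorProduct.map (AlgHom.id k H)
            (Algebra.TensorProduct.includeLeft : H →ₐ[k] H ⊗[k] H))) PhiRho
    = (Algebra.TensorProduct.map (AlgHom.id k B)
          (Algebra.TensorProduct.map (AlgHom.id k H) Q.comul)) PhiRho
      * (Algebra.TensorProduct.assoc k k k B H (H ⊗[k] H))
          ((Algebra.TensorProduct.map coact (AlgHom.id k (H ⊗[k] H))) PhiRho)
  counit_coact : ∀ b : B,
    (Algebra.TensorProduct.map (AlgHom.id k B) Q.counit) (coact b) = b ⊗ₜ[k] (1 : k)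
  counit_PhiRho_mid : (Algebra.TensorProduct.map (AlgHom.id k B)
      (Algebra.TensorProduct.map Q.counit (AlgHom.id k H))) PhiRho = 1
  counit_PhiRho_right : (Algebra.TensorProduct.map (AlgHom.id k B)
      (Algebra.TensorProduct.map (AlgHom.id k H) Q.counit)) PhiRho = 1

/-- `v : H → B` is a morphism of right `H`-comodule algebras from `H` (with its canonical
right `H`-comodule algebra structure `ρ = Δ`, `Φ_ρ = Φ`) to `B`. -/
def IsComodAlgMorphismFromH {k H B : Type*} [Field k] [Ring H] [Algebra k H]
    [Ring B] [Algebra k B] {Q : QuasiBialgebra k H}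
    (R : RightComoduleAlgebra Q B) (v : H →ₐ[k] B) : Prop :=
  (∀ h : H, R.coact (v h) = (Algebra.TensorProduct.map v (AlgHom.id k H)) (Q.comul h))
  ∧ R.PhiRho = (Algebra.TensorProduct.map v (AlgHom.id k (H ⊗[k] H))) Q.Phi

/-- Characterization of the canonical projection `E : B → B`,
`E(b) = v(q¹) b₍₀₎ v(β S(q² b₍₁₎))`, where `q_R = q¹ ⊗ q² = X¹ ⊗ S⁻¹(α X³) X²`,
stated universally over finite representations of `Φ` and of `ρ(b)`. -/
def IsCanonicalProjection {k H B : Type*} [Field k] [Ring H] [Algebra k H]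
    [Ring B] [Algebra k B] (Q : QuasiHopfAlgebra k H)
    (R : RightComoduleAlgebra Q.toQuasiBialgebra B) (v : H →ₐ[k] B) (E : B →ₗ[k] B) : Prop :=
  ∀ (b : B) (n : ℕ) (X1 X2 X3 : Fin n → H),
    Q.Phi = ∑ i, X1 i ⊗ₜ[k] (X2 i ⊗ₜ[k] X3 i) →
    ∀ (p : ℕ) (b0 : Fin p → B) (b1 : Fin p → H),
      R.coact b = ∑ j, b0 j ⊗ₜ[k] b1 j →
      E b = ∑ i, ∑ j,
        v (X1 i) * b0 j * v (Q.beta * Q.S (Q.Sinv (Q.alpha * X3 i) * X2 i * b1 j))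

/-- The map `Ψ : A ⊗ H → B`, `Ψ(a ⊗ h) = a v(h)`, where `A = E(B)` is the range of the
canonical projection `E`. -/
noncomputable def smashToB {k H B : Type*} [Field k] [Ring H] [Algebra k H]
    [Ring B] [Algebra k B] (E : B →ₗ[k] B) (v : H →ₐ[k] B) :
    (↥(LinearMap.range E)) ⊗[k] H →ₗ[k] B :=
  TensorProduct.lift
    (LinearMap.mk₂ k (fun (a : ↥(LinearMap.range E)) (h : H) => (a : B) * v h)
      (fun a a' h => by simp [add_mul])
      (fun c a h => by simp [smul_mul_assoc])
      (fun a h h' => by simp [mul_add])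
      (fun c a h => by simp [mul_smul_comm]))

namespace QHA

section basic
variable {k : Type*} [Field k]

lemma exists_rep2 {M N : Type*} [AddCommGroup M] [Module k M] [AddCommGroup N] [Module k N]
    (t : M ⊗[k] N) : ∃ (n : ℕ) (a : Fin n → M) (b : Fin n → N), t = ∑ i, a i ⊗ₜ[k] b i := by
  induction t with
  | zero => exact ⟨0, fun _ => 0, fun _ => 0, by simp⟩
  | tmul x y => exact ⟨1, fun _ => x, fun _ => y, by simp⟩
  | add s t hs ht =>
    obtain ⟨n, a, b, rfl⟩ := hs
    obtain ⟨m, c, d, rfl⟩ := ht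
    refine ⟨n + m, Fin.append a c, Fin.append b d, ?_⟩
    simp [Fin.sum_univ_add]

lemma exists_rep3 {M N P : Type*} [AddCommGroup M] [Module k M] [AddCommGroup N] [Module k N]
    [AddCommGroup P] [Module k P]
    (t : M ⊗[k] (N ⊗[k] P)) : ∃ (n : ℕ) (a : Fin n → M) (b : Fin n → N) (c : Fin n → P),
      t = ∑ i, a i ⊗ₜ[k] (b i ⊗ₜ[k] c i) := by
  induction t with
  | zero => exact ⟨0, fun _ => 0, fun _ => 0, fun _ => 0, by simp⟩
  | tmul x y =>
    obtain ⟨n, a, b, rfl⟩ := exists_rep2 y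
    exact ⟨n, fun _ => x, a, b, by simp [TensorProduct.tmul_sum]⟩
  | add s t hs ht =>
    obtain ⟨n, a, b, e, rfl⟩ := hs
    obtain ⟨m, c, d, f, rfl⟩ := ht
    refine ⟨n + m, Fin.append a c, Fin.append b d, Fin.append e f, ?_⟩
    simp [Fin.sum_univ_add]

end basic

variable {k H B : Type*} [Field k] [Ring H] [Algebra k H] [Ring B] [Algebra k B]

/-- `c ⊗ d ↦ β S(c) α d`. -/
noncomputable def kk (Q : QuasiHopfAlgebra k H) : H ⊗[k] H →ₗ[k] H :=
  TensorProduct.lift (LinearMap.mk₂ k (fun c d => Q.beta * Q.S c * Q.alpha * d)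
    (fun a a' h => by simp [add_mul, mul_add])
    (fun c a h => by simp)
    (fun a h h' => by simp [mul_add])
    (fun c a h => by simp))

@[simp] lemma kk_tmul (Q : QuasiHopfAlgebra k H) (c d : H) :
    kk Q (c ⊗ₜ d) = Q.beta * Q.S c * Q.alpha * d := rfl

/-- `c ⊗ d ↦ S(c) α d`. -/
noncomputable def lam (Q : QuasiHopfAlgebra k H) : H ⊗[k] H →ₗ[k] H :=
  TensorProduct.lift (LinearMap.mk₂ k (fun c d => Q.S c * Q.alpha * d)
    (fun a a' h => by simp [add_mul])
    (fun c a h => by simp)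
    (fun a h h' => by simp [mul_add])
    (fun c a h => by simp))

@[simp] lemma lam_tmul (Q : QuasiHopfAlgebra k H) (c d : H) :
    lam Q (c ⊗ₜ d) = Q.S c * Q.alpha * d := rfl

/-- `c ⊗ d ↦ c β S(d)`. -/
noncomputable def mu (Q : QuasiHopfAlgebra k H) : H ⊗[k] H →ₗ[k] H :=
  TensorProduct.lift (LinearMap.mk₂ k (fun c d => c * Q.beta * Q.S d)
    (fun a a' h => by simp [add_mul])
    (fun c a h => by simp)
    (fun a h h' => by simp [mul_add])
    (fun c a h => by simp))

@[simp] lemma mu_tmul (Q : QuasiHopfAlgebra k H) (c d : H) :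
    mu Q (c ⊗ₜ d) = c * Q.beta * Q.S d := rfl

lemma lam_comul (Q : QuasiHopfAlgebra k H) (h : H) :
    lam Q (Q.comul h) = Q.counit h • Q.alpha := by
  obtain ⟨n, a, b, e⟩ := exists_rep2 (Q.comul h)
  rw [← Q.antipode_left h n a b e, e]; simp

lemma mu_comul (Q : QuasiHopfAlgebra k H) (h : H) :
    mu Q (Q.comul h) = Q.counit h • Q.beta := by
  obtain ⟨n, a, b, e⟩ := exists_rep2 (Q.comul h)
  rw [← Q.antipode_right h n a b e, e]; simp

lemma kk_comul_mul (Q : QuasiHopfAlgebra k H) (h : H) (w : H ⊗[k] H) :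
    kk Q (Q.comul h * w) = Q.counit h • kk Q w := by
  induction w with
  | zero => simp
  | add x y hx hy => simp only [mul_add, map_add, hx, hy, smul_add]
  | tmul c d =>
    have key : ∀ x : H ⊗[k] H, kk Q (x * (c ⊗ₜ d)) = Q.beta * Q.S c * lam Q x * d := by
      intro x
      induction x with
      | zero => simp
      | add x y hx hy => simp only [add_mul, map_add, hx, hy, mul_add]
      | tmul a b => simp [Q.S_mul, mul_assoc]
    rw [key, lam_comul]; simp [mul_assoc]

/-- `c ⊗ s ↦ c * kk s`. -/
noncomputable def k3 (Q : QuasiHopfAlgebra k H) : H ⊗[k] (H ⊗[k] H) →ₗ[k] H :=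
  LinearMap.mul' k H ∘ₗ TensorProduct.map LinearMap.id (kk Q)

@[simp] lemma k3_tmul (Q : QuasiHopfAlgebra k H) (c : H) (s : H ⊗[k] H) :
    k3 Q (c ⊗ₜ s) = c * kk Q s := rfl

lemma k3_Phi (Q : QuasiHopfAlgebra k H) : k3 Q Q.Phi = 1 := by
  obtain ⟨n, a, b, c, e⟩ := exists_rep3 Q.Phi
  rw [← Q.antipode_Phi n a b c e, e]; simp [mul_assoc]

lemma counit_S (Q : QuasiHopfAlgebra k H) (h : H) : Q.counit (Q.S h) = Q.counit h := by
  have h1 := congrArg Q.counit (lam_comul Q h)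
  have key : ∀ x : H ⊗[k] H, Q.counit (lam Q x) =
      Q.counit (Q.S (TensorProduct.rid k H
        ((Algebra.TensorProduct.map (AlgHom.id k H) Q.counit) x))) := by
    intro x
    induction x with
    | zero => simp
    | add x y hx hy => simp only [map_add, hx, hy]
    | tmul a b => simp [Q.counit_alpha, mul_comm]
  rw [key, Q.counit_comul_right] at h1
  simpa [Q.counit_alpha] using h1

/-- `ε ⊗ id` on triple tensors. -/
noncomputable def e1 (Q : QuasiBialgebra k H) : H ⊗[k] (H ⊗[k] H) →ₐ[k] H ⊗[k] H :=
  (Algebra.TensorProduct.lid k (H ⊗[k] H)).toAlgHom.comp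
    (Algebra.TensorProduct.map Q.counit (AlgHom.id k _))

@[simp] lemma e1_tmul (Q : QuasiBialgebra k H) (a : H) (s : H ⊗[k] H) :
    e1 Q (a ⊗ₜ s) = Q.counit a • s := by simp [e1]

/-- the counit applied to the second slot of a fourfold tensor. -/
noncomputable def e42 (Q : QuasiBialgebra k H) :
    H ⊗[k] (H ⊗[k] (H ⊗[k] H)) →ₐ[k] H ⊗[k] (H ⊗[k] H) :=
  Algebra.TensorProduct.map (AlgHom.id k H) (e1 Q)

lemma e1_Phi (Q : QuasiBialgebra k H) : e1 Q Q.Phi = 1 := by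
  have h := congrArg (e42 Q) Q.pentagon
  simp only [map_mul] at h
  have h1 : e42 Q ((1 : H) ⊗ₜ[k] Q.Phi) = (1 : H) ⊗ₜ[k] e1 Q Q.Phi := by
    simp [e42]
  have hl : ∀ x : H ⊗[k] H, ∀ c : H, e1 Q ((Algebra.TensorProduct.assoc k k k H H H) (x ⊗ₜ c))
      = (TensorProduct.lid k H ((Algebra.TensorProduct.map Q.counit (AlgHom.id k H)) x)) ⊗ₜ c := by
    intro x c
    induction x with
    | zero => simp
    | add x y hx hy => simp only [map_add, TensorProduct.add_tmul, hx, hy]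
    | tmul a b => simp [TensorProduct.smul_tmul']
  have h2 : ∀ t, e42 Q ((Algebra.TensorProduct.map (AlgHom.id k H)
          (((Algebra.TensorProduct.assoc k k k H H H).toAlgHom).comp
            (Algebra.TensorProduct.map Q.comul (AlgHom.id k H)))) t) = t := by
    have : (e42 Q).comp (Algebra.TensorProduct.map (AlgHom.id k H)
          (((Algebra.TensorProduct.assoc k k k H H H).toAlgHom).comp
            (Algebra.TensorProduct.map Q.comul (AlgHom.id k H)))) = AlgHom.id k _ := by
      rw [e42, ← Algebra.TensorProduct.map_comp]
      have : (e1 Q).comp (((Algebra.TensorProduct.assoc k k k H H H).toAlgHom).comp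
            (Algebra.TensorProduct.map Q.comul (AlgHom.id k H))) = AlgHom.id k _ := by
        apply AlgHom.ext
        intro s
        induction s with
        | zero => simp
        | add x y hx hy => simp only [map_add, hx, hy]
        | tmul a c =>
          have := hl (Q.comul a) c
          rw [Q.counit_comul_left] at this
          simpa using this
      rw [this]; simp
    intro t
    exact congrArg (fun f => f t) this
  have h3 : e42 Q ((Algebra.TensorProduct.map (AlgHom.id k H)
          (Algebra.TensorProduct.map (AlgHom.id k H)
            (Algebra.TensorProduct.includeLeft : H →ₐ[k] H ⊗[k] H))) Q.Phi) = 1 := by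
    have key : ∀ t : H ⊗[k] (H ⊗[k] H), e42 Q ((Algebra.TensorProduct.map (AlgHom.id k H)
          (Algebra.TensorProduct.map (AlgHom.id k H)
            (Algebra.TensorProduct.includeLeft : H →ₐ[k] H ⊗[k] H))) t) =
        (Algebra.TensorProduct.map (AlgHom.id k H)
          ((Algebra.TensorProduct.includeLeft : H →ₐ[k] H ⊗[k] H).comp
            (Algebra.TensorProduct.lid k H).toAlgHom))
         ((Algebra.TensorProduct.map (AlgHom.id k H)
          (Algebra.TensorProduct.map Q.counit (AlgHom.id k H))) t) := by
      intro t
      obtain ⟨n, a, b, c, rfl⟩ := exists_rep3 t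
      simp [e42, TensorProduct.smul_tmul']
    rw [key, Q.counit_Phi, map_one]
  have h4 : e42 Q ((Algebra.TensorProduct.map (AlgHom.id k H)
          (Algebra.TensorProduct.map (AlgHom.id k H) Q.comul)) Q.Phi) = 1 := by
    have key : ∀ t : H ⊗[k] (H ⊗[k] H), e42 Q ((Algebra.TensorProduct.map (AlgHom.id k H)
          (Algebra.TensorProduct.map (AlgHom.id k H) Q.comul)) t) =
        (Algebra.TensorProduct.map (AlgHom.id k H)
          (Q.comul.comp (Algebra.TensorProduct.lid k H).toAlgHom))
         ((Algebra.TensorProduct.map (AlgHom.id k H)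
          (Algebra.TensorProduct.map Q.counit (AlgHom.id k H))) t) := by
      intro t
      obtain ⟨n, a, b, c, rfl⟩ := exists_rep3 t
      simp [e42]
    rw [key, Q.counit_Phi, map_one]
  have h5 : ∀ t, e42 Q ((Algebra.TensorProduct.assoc k k k H H (H ⊗[k] H))
          ((Algebra.TensorProduct.map Q.comul (AlgHom.id k (H ⊗[k] H))) t)) = t := by
    intro t
    have hr : ∀ x : H ⊗[k] H, ∀ s : H ⊗[k] H,
        e42 Q ((Algebra.TensorProduct.assoc k k k H H (H ⊗[k] H)) (x ⊗ₜ s))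
        = (TensorProduct.rid k H ((Algebra.TensorProduct.map (AlgHom.id k H) Q.counit) x)) ⊗ₜ s := by
      intro x s
      induction x with
      | zero => simp
      | add x y hx hy => simp only [map_add, TensorProduct.add_tmul, hx, hy]
      | tmul a b => simp [e42, TensorProduct.smul_tmul']
    induction t with
    | zero => simp
    | add x y hx hy => simp only [map_add, hx, hy]
    | tmul a s =>
      have := hr (Q.comul a) s
      rw [Q.counit_comul_right] at this
      simpa using this
  rw [h1, h2, h3, h4, h5, one_mul, mul_one] at h
  have h6 : (1 : H) ⊗ₜ[k] e1 Q Q.Phi = 1 := by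
    calc (1 : H) ⊗ₜ[k] e1 Q Q.Phi = ((1 : H) ⊗ₜ[k] e1 Q Q.Phi * Q.Phi) * Q.PhiInv := by
          rw [mul_assoc, Q.Phi_mul_inv, mul_one]
      _ = 1 := by rw [h, Q.Phi_mul_inv]
  have := congrArg (e1 Q) h6
  simpa using this

section comod
set_option synthInstance.maxHeartbeats 200000
set_option maxSynthPendingDepth 10
set_option maxHeartbeats 1000000
variable (Q : QuasiHopfAlgebra k H) (R : RightComoduleAlgebra Q.toQuasiBialgebra B)
    (v : H →ₐ[k] B)

/-- `b ⊗ s ↦ b v(kk s)`. -/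
noncomputable def KK : B ⊗[k] (H ⊗[k] H) →ₗ[k] B :=
  LinearMap.mul' k B ∘ₗ TensorProduct.map LinearMap.id (v.toLinearMap ∘ₗ kk Q)

@[simp] lemma KK_tmul (b : B) (s : H ⊗[k] H) : KK Q v (b ⊗ₜ s) = b * v (kk Q s) := rfl

/-- `b ⊗ h ↦ b ⊗ h ⊗ 1`. -/
noncomputable def i12 : B ⊗[k] H →ₐ[k] B ⊗[k] (H ⊗[k] H) :=
  Algebra.TensorProduct.map (AlgHom.id k B)
    (Algebra.TensorProduct.includeLeft : H →ₐ[k] H ⊗[k] H)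

@[simp] lemma i12_tmul (b : B) (h : H) : i12 (k := k) (b ⊗ₜ[k] h) = b ⊗ₜ[k] (h ⊗ₜ[k] 1) := by
  simp [i12]

variable {Q} in
/-- `(ρ ⊗ id)` reassociated. -/
noncomputable def R3 : B ⊗[k] H →ₐ[k] B ⊗[k] (H ⊗[k] H) :=
  (Algebra.TensorProduct.assoc k k k B H H).toAlgHom.comp
    (Algebra.TensorProduct.map R.coact (AlgHom.id k H))

lemma R3_tmul (b : B) (h : H) :
    R3 R (b ⊗ₜ h) = i12 (R.coact b) * ((1 : B) ⊗ₜ ((1 : H) ⊗ₜ h)) := by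
  have key : ∀ x : B ⊗[k] H, (Algebra.TensorProduct.assoc k k k B H H) (x ⊗ₜ h) =
      i12 x * ((1 : B) ⊗ₜ ((1 : H) ⊗ₜ h)) := by
    intro x
    induction x with
    | zero => simp
    | add x y hx hy => simp only [map_add, TensorProduct.add_tmul, hx, hy, add_mul]
    | tmul a b => simp
  rw [← key]; simp [R3]

/-- `id ⊗ Δ`. -/
noncomputable def D3 : B ⊗[k] H →ₐ[k] B ⊗[k] (H ⊗[k] H) :=
  Algebra.TensorProduct.map (AlgHom.id k B) Q.comul

@[simp] lemma D3_tmul (b : B) (h : H) :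
    D3 Q (b ⊗ₜ[k] h) = b ⊗ₜ[k] (Q.comul h) := by
  simp [D3]

/-- `id ⊗ ε`. -/
noncomputable def e2 : B ⊗[k] H →ₐ[k] B :=
  (Algebra.TensorProduct.rid k k B).toAlgHom.comp
    (Algebra.TensorProduct.map (AlgHom.id k B) Q.counit)

@[simp] lemma e2_tmul (b : B) (h : H) :
    e2 Q (b ⊗ₜ[k] h) = Q.counit h • b := by
  simp [e2]

lemma e2_coact (b : B) : e2 Q (R.coact b) = b := by
  simp [e2, R.counit_coact]

/-- `id ⊗ ε ⊗ ε`. -/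
noncomputable def e3 : B ⊗[k] (H ⊗[k] H) →ₐ[k] B :=
  (e2 Q).comp (Algebra.TensorProduct.map (AlgHom.id k B) (e2 Q))

@[simp] lemma e3_tmul (b : B) (c d : H) :
    e3 Q (b ⊗ₜ[k] (c ⊗ₜ d)) = (Q.counit c * Q.counit d) • b := by
  simp [e3, mul_smul, smul_comm (Q.counit c)]

lemma coassoc' (b : B) :
    R.PhiRho * R3 R (R.coact b) = D3 Q (R.coact b) * R.PhiRho := R.coact_coassoc b

lemma KK_mul_right (t : B ⊗[k] (H ⊗[k] H)) (h : H) :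
    KK Q v (t * ((1 : B) ⊗ₜ ((1 : H) ⊗ₜ h))) = KK Q v t * v h := by
  obtain ⟨n, a, b, c, rfl⟩ := exists_rep3 t
  simp [Finset.sum_mul, mul_assoc]

lemma KK_D3_mul (s : B ⊗[k] H) (t : B ⊗[k] (H ⊗[k] H)) :
    KK Q v (D3 Q s * t) = e2 Q s * KK Q v t := by
  induction s with
  | zero => simp
  | add x y hx hy => simp only [map_add, add_mul, hx, hy]
  | tmul b h =>
    induction t with
    | zero => simp
    | add x y hx hy => simp only [map_add, mul_add, hx, hy]
    | tmul b' s => simp [kk_comul_mul, mul_assoc]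

variable {R v} in
lemma KK_mul_coact (hv : IsComodAlgMorphismFromH R v) (t : B ⊗[k] (H ⊗[k] H)) (h : H) :
    KK Q v (t * i12 (R.coact (v h))) = Q.counit h • KK Q v t := by
  rw [hv.1]
  have key : ∀ (b : B) (c d : H) (x : H ⊗[k] H),
      KK Q v ((b ⊗ₜ (c ⊗ₜ d)) * i12 (Algebra.TensorProduct.map v (AlgHom.id k H) x)) =
      b * v (mu Q x * Q.S c * Q.alpha * d) := by
    intro b c d x
    induction x with
    | zero => simp
    | add x y hx hy => simp only [map_add, mul_add, add_mul, hx, hy]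
    | tmul p q => simp [Q.S_mul, mul_assoc]
  obtain ⟨n, a, b, c, rfl⟩ := exists_rep3 t
  simp only [Finset.sum_mul, map_sum, Finset.smul_sum, key, mu_comul]
  simp

lemma counit_kk (c d : H) : Q.counit (kk Q (c ⊗ₜ d)) = Q.counit c * Q.counit d := by
  simp [Q.counit_alpha, Q.counit_beta, counit_S]

variable {R v} {E : B →ₗ[k] B}


lemma E_eq (hv : IsComodAlgMorphismFromH R v) (hE : IsCanonicalProjection Q R v E)
    (b : B) : E b = KK Q v (R.PhiRho * i12 (R.coact b)) := by
  obtain ⟨n, X1, X2, X3, e⟩ := exists_rep3 Q.Phi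
  obtain ⟨p, b0, b1, e'⟩ := exists_rep2 (R.coact b)
  rw [hE b n X1 X2 X3 e p b0 b1 e', hv.2, e, e', Finset.sum_comm]
  simp [Finset.sum_mul, Finset.mul_sum, Q.S_mul, Q.S_Sinv, mul_assoc]

lemma E_one (hv : IsComodAlgMorphismFromH R v) (hE : IsCanonicalProjection Q R v E)
    : E 1 = 1 := by
  rw [E_eq Q hv hE, map_one, map_one, mul_one, hv.2]
  have key : ∀ t, KK Q v (Algebra.TensorProduct.map v (AlgHom.id k (H ⊗[k] H)) t) =
      v (k3 Q t) := by
    intro t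
    induction t with
    | zero => simp
    | add x y hx hy => simp only [map_add, hx, hy]
    | tmul a s => simp
  rw [key, k3_Phi, map_one]

lemma E_mul_v (hv : IsComodAlgMorphismFromH R v) (hE : IsCanonicalProjection Q R v E)
    (b : B) (h : H) : E (b * v h) = Q.counit h • E b := by
  rw [E_eq Q hv hE, E_eq Q hv hE, map_mul R.coact, map_mul i12, ← mul_assoc, KK_mul_coact Q hv]

/-- `b ⊗ h ↦ E(b) v(h)`. -/
noncomputable def Et (E : B →ₗ[k] B) (v : H →ₐ[k] B) : B ⊗[k] H →ₗ[k] B :=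
  LinearMap.mul' k B ∘ₗ TensorProduct.map E v.toLinearMap

@[simp] lemma Et_tmul (b : B) (h : H) : Et E v (b ⊗ₜ[k] h) = E b * v h := rfl

lemma Et_eq (hv : IsComodAlgMorphismFromH R v) (hE : IsCanonicalProjection Q R v E)
    (s : B ⊗[k] H) : Et E v s = KK Q v (R.PhiRho * R3 R s) := by
  induction s with
  | zero => simp
  | add x y hx hy => simp only [map_add, mul_add, hx, hy]
  | tmul b h => rw [Et_tmul, R3_tmul, ← mul_assoc, KK_mul_right, ← E_eq Q hv hE]

lemma Et_coact_mul (hv : IsComodAlgMorphismFromH R v) (hE : IsCanonicalProjection Q R v E)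
    (b m : B) : Et E v (R.coact b * (m ⊗ₜ 1)) = b * E m := by
  rw [Et_eq Q hv hE, map_mul (R3 R), ← mul_assoc, coassoc', mul_assoc, KK_D3_mul, e2_coact, R3_tmul,
    E_eq Q hv hE]
  rw [← Algebra.TensorProduct.one_def, ← Algebra.TensorProduct.one_def, mul_one]

lemma Et_coact (hv : IsComodAlgMorphismFromH R v) (hE : IsCanonicalProjection Q R v E)
    (b : B) : Et E v (R.coact b) = b := by
  have := Et_coact_mul Q hv hE b 1
  rwa [← Algebra.TensorProduct.one_def, mul_one, E_one Q hv hE, mul_one] at this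

lemma E_mul_KK (hv : IsComodAlgMorphismFromH R v) (hE : IsCanonicalProjection Q R v E)
    (b : B) (t : B ⊗[k] (H ⊗[k] H)) : E (b * KK Q v t) = E (b * e3 Q t) := by
  obtain ⟨n, a, c, d, rfl⟩ := exists_rep3 t
  simp only [map_sum, Finset.mul_sum]
  refine Finset.sum_congr rfl fun i _ => ?_
  rw [KK_tmul, ← mul_assoc, E_mul_v Q hv hE, counit_kk]
  simp

lemma e3_PhiRho : e3 Q R.PhiRho = 1 := by
  have key : ∀ t : B ⊗[k] (H ⊗[k] H), e3 Q t =
      (e2 Q).comp (Algebra.TensorProduct.map (AlgHom.id k B)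
        ((Algebra.TensorProduct.lid k H).toAlgHom)) ((Algebra.TensorProduct.map (AlgHom.id k B)
      (Algebra.TensorProduct.map Q.counit (AlgHom.id k H))) t) := by
    intro t
    obtain ⟨n, a, c, d, rfl⟩ := exists_rep3 t
    simp [mul_smul]
  rw [key, R.counit_PhiRho_mid, map_one]

lemma e3_i12 (s : B ⊗[k] H) : e3 Q (i12 s) = e2 Q s := by
  induction s with
  | zero => simp
  | add x y hx hy => simp only [map_add, hx, hy]
  | tmul b h => simp

lemma E_mul_E (hv : IsComodAlgMorphismFromH R v) (hE : IsCanonicalProjection Q R v E)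
    (b m : B) : E (b * E m) = E (b * m) := by
  rw [E_eq Q hv hE m, E_mul_KK Q hv hE, map_mul (e3 Q), e3_PhiRho, e3_i12, e2_coact, one_mul]

lemma E_E (hv : IsComodAlgMorphismFromH R v) (hE : IsCanonicalProjection Q R v E)
    (m : B) : E (E m) = E m := by simpa using E_mul_E Q hv hE 1 m

/-- `E ⊗ id`. -/
noncomputable def Eid (H : Type*) [Ring H] [Algebra k H] (E : B →ₗ[k] B) :
    B ⊗[k] H →ₗ[k] B ⊗[k] H :=
  TensorProduct.map E LinearMap.id

@[simp] lemma Eid_tmul (b : B) (h : H) : Eid H E (b ⊗ₜ[k] h) = E b ⊗ₜ h := rfl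

lemma Eid_mul_coact (hv : IsComodAlgMorphismFromH R v) (hE : IsCanonicalProjection Q R v E)
    (s : B ⊗[k] H) (h : H) :
    Eid H E (s * R.coact (v h)) = Eid H E (s * (1 ⊗ₜ h)) := by
  induction s with
  | zero => simp
  | add x y hx hy => simp only [map_add, add_mul, hx, hy]
  | tmul b c =>
    rw [hv.1]
    have key : ∀ x : H ⊗[k] H, Eid H E ((b ⊗ₜ[k] c) *
        Algebra.TensorProduct.map v (AlgHom.id k H) x) = E b ⊗ₜ (c *
          TensorProduct.lid k H ((Algebra.TensorProduct.map Q.counit (AlgHom.id k H)) x)) := by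
      intro x
      induction x with
      | zero => simp
      | add x y hx hy => simp only [map_add, mul_add, hx, hy, TensorProduct.tmul_add]
      | tmul p q => simp [E_mul_v Q hv hE, TensorProduct.smul_tmul]
    rw [key, Q.counit_comul_left]; simp

/-- `b ⊗ c ⊗ d ⊗ e ↦ b ⊗ c β S(d) α e`. -/
noncomputable def K4 (B : Type*) [Ring B] [Algebra k B] (Q : QuasiHopfAlgebra k H) :
    B ⊗[k] (H ⊗[k] (H ⊗[k] H)) →ₗ[k] B ⊗[k] H :=
  TensorProduct.map LinearMap.id (k3 Q)

@[simp] lemma K4_tmul (b : B) (t : H ⊗[k] (H ⊗[k] H)) :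
    K4 B Q (b ⊗ₜ[k] t) = b ⊗ₜ k3 Q t := rfl

/-- `ρ ⊗ id ⊗ id`. -/
noncomputable def R4 {Q : QuasiHopfAlgebra k H} (R : RightComoduleAlgebra Q.toQuasiBialgebra B) :
    B ⊗[k] (H ⊗[k] H) →ₐ[k] B ⊗[k] (H ⊗[k] (H ⊗[k] H)) :=
  (Algebra.TensorProduct.assoc k k k B H (H ⊗[k] H)).toAlgHom.comp
    (Algebra.TensorProduct.map R.coact (AlgHom.id k (H ⊗[k] H)))

/-- `t ↦ t ⊗ 1`. -/
noncomputable def j123 : B ⊗[k] (H ⊗[k] H) →ₐ[k] B ⊗[k] (H ⊗[k] (H ⊗[k] H)) :=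
  (Algebra.TensorProduct.map (AlgHom.id k B)
          (Algebra.TensorProduct.map (AlgHom.id k H)
            (Algebra.TensorProduct.includeLeft : H →ₐ[k] H ⊗[k] H)))

@[simp] lemma j123_tmul (b : B) (c d : H) :
    j123 (k := k) (b ⊗ₜ[k] (c ⊗ₜ[k] d)) = b ⊗ₜ[k] (c ⊗ₜ[k] (d ⊗ₜ[k] 1)) := by
  simp [j123]

lemma R4_i12 (s : B ⊗[k] H) : R4 R (i12 s) = j123 (R3 R s) := by
  induction s with
  | zero => simp
  | add x y hx hy => simp only [map_add, hx, hy]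
  | tmul b h =>
    have key : ∀ x : B ⊗[k] H,
        (Algebra.TensorProduct.assoc k k k B H (H ⊗[k] H)) (x ⊗ₜ (h ⊗ₜ 1)) =
        j123 ((Algebra.TensorProduct.assoc k k k B H H) (x ⊗ₜ h)) := by
      intro x
      induction x with
      | zero => simp
      | add x y hx hy => simp only [map_add, TensorProduct.add_tmul, hx, hy]
      | tmul a b => simp
    simpa [R4, R3] using key (R.coact b)

lemma Eid_coact_KK (hv : IsComodAlgMorphismFromH R v) (hE : IsCanonicalProjection Q R v E)
    (t : B ⊗[k] (H ⊗[k] H)) :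
    Eid H E (R.coact (KK Q v t)) = Eid H E (K4 B Q (R4 R t)) := by
  induction t with
  | zero => simp
  | add x y hx hy => simp only [map_add, hx, hy]
  | tmul b s =>
    rw [KK_tmul, map_mul, Eid_mul_coact Q hv hE]
    have key : ∀ x : B ⊗[k] H, x * (1 ⊗ₜ kk Q s) =
        K4 B Q ((Algebra.TensorProduct.assoc k k k B H (H ⊗[k] H)) (x ⊗ₜ s)) := by
      intro x
      induction x with
      | zero => simp
      | add x y hx hy => simp only [map_add, TensorProduct.add_tmul, hx, hy, add_mul]
      | tmul a b => simp
    rw [key]; simp [R4]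

lemma Eid_K4_mul_v (hv : IsComodAlgMorphismFromH R v) (hE : IsCanonicalProjection Q R v E)
    (t : B ⊗[k] (H ⊗[k] (H ⊗[k] H))) (y : H ⊗[k] (H ⊗[k] H)) :
    Eid H E (K4 B Q (t * j123 (Algebra.TensorProduct.map v (AlgHom.id k (H ⊗[k] H)) y))) =
    Eid H E (K4 B Q (t * ((1 : B) ⊗ₜ i12 (e1 Q.toQuasiBialgebra y)))) := by
  obtain ⟨n, a, b, c, rfl⟩ := exists_rep3 y
  simp only [map_sum, Finset.mul_sum, TensorProduct.tmul_sum]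
  refine Finset.sum_congr rfl fun i _ => ?_
  induction t with
  | zero => simp
  | add x y hx hy => simp only [map_add, hx, hy, add_mul]
  | tmul p s => simp [E_mul_v Q hv hE, TensorProduct.smul_tmul]

lemma K4_mul_D3 (t : B ⊗[k] (H ⊗[k] (H ⊗[k] H))) (s : B ⊗[k] H) :
    K4 B Q (t * j123 (D3 Q s)) = K4 B Q t * (e2 Q s ⊗ₜ 1) := by
  have key : ∀ (p : H) (c d : H) (x : H ⊗[k] H),
      k3 Q ((p ⊗ₜ (c ⊗ₜ d)) * i12 x) = p * mu Q x * Q.S c * Q.alpha * d := by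
    intro p c d x
    induction x with
    | zero => simp
    | add x y hx hy => simp only [map_add, mul_add, add_mul, hx, hy]
    | tmul p q => simp [Q.S_mul, mul_assoc]
  have key2 : ∀ (w : H ⊗[k] (H ⊗[k] H)) (h : H),
      k3 Q (w * i12 (Q.comul h)) = Q.counit h • k3 Q w := by
    intro w h
    obtain ⟨n, a, b, c, rfl⟩ := exists_rep3 w
    simp only [Finset.sum_mul, map_sum, Finset.smul_sum, key, mu_comul]
    simp [mul_assoc]
  induction s with
  | zero => simp
  | add x y hx hy => simp only [map_add, mul_add, hx, hy, TensorProduct.add_tmul]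
  | tmul b h =>
    induction t with
    | zero => simp
    | add x y hx hy => simp only [map_add, add_mul, hx, hy]
    | tmul b' w =>
      have : j123 (D3 Q (b ⊗ₜ[k] h)) = b ⊗ₜ[k] i12 (Q.comul h) := by simp [j123, i12]
      rw [this]
      simp [key2, TensorProduct.smul_tmul']

/-- left multiplication by `(id ⊗ id ⊗ Δ)(z)`. -/
lemma K4_Delta_mul (z : B ⊗[k] (H ⊗[k] H)) (t : B ⊗[k] (H ⊗[k] (H ⊗[k] H))) :
    K4 B Q ((Algebra.TensorProduct.map (AlgHom.id k B)
          (Algebra.TensorProduct.map (AlgHom.id k H) Q.comul)) z * t) =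
    (Algebra.TensorProduct.map (AlgHom.id k B) (e2 Q)) z * K4 B Q t := by
  obtain ⟨n, a, b, c, rfl⟩ := exists_rep3 z
  simp only [map_sum, Finset.sum_mul]
  refine Finset.sum_congr rfl fun i _ => ?_
  induction t with
  | zero => simp
  | add x y hx hy => simp only [map_add, hx, hy, mul_add]
  | tmul p s =>
    induction s with
    | zero => simp
    | add x y hx hy => simp only [TensorProduct.tmul_add, map_add, hx, hy, mul_add]
    | tmul q w => simp [kk_comul_mul, mul_assoc]

lemma K4_Phi_mul (z : B ⊗[k] (H ⊗[k] H)) :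
    K4 B Q (((1 : B) ⊗ₜ[k] Q.Phi) * (Algebra.TensorProduct.map (AlgHom.id k B)
          (((Algebra.TensorProduct.assoc k k k H H H).toAlgHom).comp
            (Algebra.TensorProduct.map Q.comul (AlgHom.id k H)))) z) =
    (Algebra.TensorProduct.map (AlgHom.id k B) ((Algebra.TensorProduct.lid k H).toAlgHom.comp
      (Algebra.TensorProduct.map Q.counit (AlgHom.id k H)))) z := by
  have key : ∀ (p c d e : H) (x : H ⊗[k] H),
      k3 Q ((p ⊗ₜ (c ⊗ₜ d)) * (Algebra.TensorProduct.assoc k k k H H H) (x ⊗ₜ e))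
       = p * mu Q x * Q.S c * Q.alpha * d * e := by
    intro p c d e x
    induction x with
    | zero => simp
    | add x y hx hy => simp only [map_add, TensorProduct.add_tmul, mul_add, add_mul, hx, hy]
    | tmul p q => simp [Q.S_mul, mul_assoc]
  have key2 : ∀ (w : H ⊗[k] (H ⊗[k] H)) (h e : H),
      k3 Q (w * (Algebra.TensorProduct.assoc k k k H H H) (Q.comul h ⊗ₜ e)) =
        Q.counit h • (k3 Q w * e) := by
    intro w h e
    obtain ⟨n, a, b, c, rfl⟩ := exists_rep3 w
    simp only [Finset.sum_mul, map_sum, Finset.smul_sum, key, mu_comul]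
    simp [mul_assoc]
  obtain ⟨n, a, b, c, rfl⟩ := exists_rep3 z
  simp only [map_sum, Finset.mul_sum]
  refine Finset.sum_congr rfl fun i _ => ?_
  simp [key2, k3_Phi]

lemma K4_W (R : RightComoduleAlgebra Q.toQuasiBialgebra B) :
    K4 B Q (R4 R R.PhiRho * j123 R.PhiRhoInv) = 1 := by
  have p := R.pentagon
  have h0 : j123 R.PhiRho * j123 R.PhiRhoInv = 1 := by
    rw [← map_mul, R.PhiRho_mul_inv, map_one]
  have h1 := congrArg (fun t => K4 B Q (t * j123 R.PhiRhoInv)) p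
  simp only [mul_assoc] at h1
  have h2 : K4 B Q (((1 : B) ⊗ₜ[k] Q.Phi) * ((Algebra.TensorProduct.map (AlgHom.id k B)
          (((Algebra.TensorProduct.assoc k k k H H H).toAlgHom).comp
            (Algebra.TensorProduct.map Q.comul (AlgHom.id k H)))) R.PhiRho *
            (j123 R.PhiRho * j123 R.PhiRhoInv))) =
      K4 B Q ((Algebra.TensorProduct.map (AlgHom.id k B)
          (Algebra.TensorProduct.map (AlgHom.id k H) Q.comul)) R.PhiRho *
            (R4 R R.PhiRho * j123 R.PhiRhoInv)) := h1
  rw [h0, mul_one, K4_Phi_mul, K4_Delta_mul] at h2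
  have h3 : (Algebra.TensorProduct.map (AlgHom.id k B) (e2 Q)) R.PhiRho = 1 := by
    have := congrArg (Algebra.TensorProduct.map (AlgHom.id k B)
      (Algebra.TensorProduct.rid k k H).toAlgHom) R.counit_PhiRho_right
    rw [map_one] at this
    rw [← this, e2, ← AlgHom.comp_apply, ← Algebra.TensorProduct.map_comp, AlgHom.comp_id]
  have h4 : (Algebra.TensorProduct.map (AlgHom.id k B)
      ((Algebra.TensorProduct.lid k H).toAlgHom.comp
      (Algebra.TensorProduct.map Q.counit (AlgHom.id k H)))) R.PhiRho = 1 := by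
    have := congrArg (Algebra.TensorProduct.map (AlgHom.id k B)
      (Algebra.TensorProduct.lid k H).toAlgHom) R.counit_PhiRho_mid
    rw [map_one] at this
    rw [← this, ← AlgHom.comp_apply, ← Algebra.TensorProduct.map_comp, AlgHom.comp_id]
  rw [h3, h4, one_mul] at h2
  exact h2.symm

lemma R3_coact (b : B) :
    R3 R (R.coact b) = R.PhiRhoInv * D3 Q (R.coact b) * R.PhiRho := by
  rw [mul_assoc, ← coassoc', ← mul_assoc, R.inv_mul_PhiRho, one_mul]

lemma Eid_coact_E (hv : IsComodAlgMorphismFromH R v) (hE : IsCanonicalProjection Q R v E)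
    (m : B) : Eid H E (R.coact (E m)) = E m ⊗ₜ 1 := by
  rw [E_eq Q hv hE m, Eid_coact_KK Q hv hE, map_mul (R4 R), R4_i12, R3_coact, map_mul j123, map_mul j123,
    ← mul_assoc, ← mul_assoc]
  conv_lhs => rw [hv.2]
  rw [← hv.2, hv.2, Eid_K4_mul_v Q hv hE, e1_Phi, map_one, ← Algebra.TensorProduct.one_def, mul_one,
    K4_mul_D3, ← hv.2, K4_W, e2_coact, one_mul, Eid_tmul, E_eq Q hv hE]

/-- `b ⊗ c ⊗ d ↦ E(b) v(c) ⊗ d`. -/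
noncomputable def GG (E : B →ₗ[k] B) (v : H →ₐ[k] B) : B ⊗[k] (H ⊗[k] H) →ₗ[k] B ⊗[k] H :=
  (TensorProduct.map (Et E v) LinearMap.id) ∘ₗ
    (TensorProduct.assoc k B H H).symm.toLinearMap

@[simp] lemma GG_tmul (b : B) (c d : H) :
    GG E v (b ⊗ₜ[k] (c ⊗ₜ[k] d)) = (E b * v c) ⊗ₜ d := rfl

lemma GG_R3 (s : B ⊗[k] H) : GG E v (R3 R s) =
    TensorProduct.map ((Et E v) ∘ₗ R.coact.toLinearMap) LinearMap.id s := by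
  induction s with
  | zero => simp
  | add x y hx hy => simp only [map_add, hx, hy]
  | tmul b h =>
    have : (Algebra.TensorProduct.assoc k k k B H H) (R.coact b ⊗ₜ h) =
      TensorProduct.assoc k B H H (R.coact b ⊗ₜ h) := rfl
    simp [R3, GG, this]

lemma GG_R3' (hv : IsComodAlgMorphismFromH R v) (hE : IsCanonicalProjection Q R v E)
    (s : B ⊗[k] H) : GG E v (R3 R s) = s := by
  rw [GG_R3 Q s]
  have : (Et E v) ∘ₗ R.coact.toLinearMap = LinearMap.id :=
    LinearMap.ext fun b => Et_coact Q hv hE b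
  rw [this]; simp

lemma GG_mul_v (hv : IsComodAlgMorphismFromH R v) (hE : IsCanonicalProjection Q R v E)
    (t : B ⊗[k] (H ⊗[k] H)) (y : H ⊗[k] (H ⊗[k] H)) :
    GG E v (t * Algebra.TensorProduct.map v (AlgHom.id k (H ⊗[k] H)) y) =
    GG E v (t * (1 ⊗ₜ e1 Q.toQuasiBialgebra y)) := by
  obtain ⟨n, a, b, c, rfl⟩ := exists_rep3 y
  obtain ⟨n, p, q, r, rfl⟩ := exists_rep3 t
  simp [Finset.mul_sum, Finset.sum_mul, E_mul_v Q hv hE, TensorProduct.tmul_sum, TensorProduct.smul_tmul']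

lemma GG_mul_D3 (hv : IsComodAlgMorphismFromH R v) (hE : IsCanonicalProjection Q R v E)
    (y : H ⊗[k] (H ⊗[k] H)) (s : B ⊗[k] H) :
    GG E v (Algebra.TensorProduct.map v (AlgHom.id k (H ⊗[k] H)) y * D3 Q s) =
    GG E v (Algebra.TensorProduct.map v (AlgHom.id k (H ⊗[k] H)) y * D3 Q (Eid H E s)) := by
  induction s with
  | zero => simp
  | add x y hx hy => simp only [map_add, mul_add, hx, hy]
  | tmul b h =>
    obtain ⟨n, p, q, r, rfl⟩ := exists_rep3 y
    obtain ⟨m, c, d, e⟩ := exists_rep2 (Q.comul h)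
    simp [e, Finset.mul_sum, Finset.sum_mul, TensorProduct.tmul_sum, E_mul_E Q hv hE]

lemma PhiRhoInv_eq (hv : IsComodAlgMorphismFromH R v)
    : R.PhiRhoInv =
    Algebra.TensorProduct.map v (AlgHom.id k (H ⊗[k] H)) Q.PhiInv := by
  have h : R.PhiRho * Algebra.TensorProduct.map v (AlgHom.id k (H ⊗[k] H)) Q.PhiInv = 1 := by
    rw [hv.2, ← map_mul, Q.Phi_mul_inv, map_one]
  exact left_inv_eq_right_inv R.inv_mul_PhiRho h

/-- The coinvariance formula `ρ(a) = E(x¹ a) x² ⊗ x³` for `a ∈ A`. -/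
lemma coact_of_mem (hv : IsComodAlgMorphismFromH R v) (hE : IsCanonicalProjection Q R v E)
    (a : B) (ha : a ∈ LinearMap.range E) :
    R.coact a = GG E v (Algebra.TensorProduct.map v (AlgHom.id k (H ⊗[k] H)) Q.PhiInv *
      (a ⊗ₜ 1)) := by
  obtain ⟨m, rfl⟩ := ha
  conv_lhs => rw [← GG_R3' Q hv hE (R.coact (E m)), R3_coact, hv.2]
  rw [GG_mul_v Q hv hE, e1_Phi, ← Algebra.TensorProduct.one_def, mul_one,
    PhiRhoInv_eq Q hv, GG_mul_D3 Q hv hE, Eid_coact_E Q hv hE, D3_tmul, map_one]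

lemma v_mul_E (hv : IsComodAlgMorphismFromH R v) (hE : IsCanonicalProjection Q R v E)
    (h : H) (m : B) (n : ℕ) (d1 d2 : Fin n → H)
    (hd : Q.comul h = ∑ j, d1 j ⊗ₜ[k] d2 j) :
    v h * E m = ∑ j, E (v (d1 j) * m) * v (d2 j) := by
  rw [← Et_coact_mul Q hv hE, hv.1, hd]
  simp [Finset.sum_mul]

lemma E_id (hv : IsComodAlgMorphismFromH R v) (hE : IsCanonicalProjection Q R v E)
    (a : B) (ha : a ∈ LinearMap.range E) : E a = a := by
  obtain ⟨m, rfl⟩ := ha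
  exact E_E Q hv hE m

lemma counit_sum (h : H) (n : ℕ) (d1 d2 : Fin n → H) (hd : Q.comul h = ∑ j, d1 j ⊗ₜ[k] d2 j) :
    ∑ j, Q.counit (d2 j) • d1 j = h := by
  have := congrArg (TensorProduct.rid k H) (Q.counit_comul_right h)
  rw [hd] at this
  simpa using this

/-- `E(m v(h) E(b)) = E(m E(v(h) b))`. -/
lemma E_mul_v_mul_E (hv : IsComodAlgMorphismFromH R v) (hE : IsCanonicalProjection Q R v E)
    (m b : B) (h : H) : E (m * v h * E b) = E (m * E (v h * b)) := by
  obtain ⟨n, d1, d2, hd⟩ := exists_rep2 (Q.comul h)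
  rw [mul_assoc, v_mul_E Q hv hE h b n d1 d2 hd]
  conv_rhs => rw [← counit_sum Q h n d1 d2 hd]
  simp [Finset.mul_sum, Finset.sum_mul, ← mul_assoc, E_mul_v Q hv hE]

/-- `ab = E(E(x¹ a) E(x² b)) x³`. -/
lemma mul_eq (hv : IsComodAlgMorphismFromH R v) (hE : IsCanonicalProjection Q R v E)
    (a b : B) (ha : a ∈ LinearMap.range E) (hb : b ∈ LinearMap.range E)
    (n : ℕ) (x1 x2 x3 : Fin n → H)
    (hx : Q.PhiInv = ∑ i, x1 i ⊗ₜ[k] (x2 i ⊗ₜ[k] x3 i)) :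
    a * b = ∑ i, E (E (v (x1 i) * a) * E (v (x2 i) * b)) * v (x3 i) := by
  have hEb : ∀ s : B ⊗[k] H, Et E v (s * R.coact b) = Et E v (s * (b ⊗ₜ 1)) := by
    intro s
    have key : ∀ s x : B ⊗[k] H, Et E v (s * x) = Et E v (s * Eid H E x) := by
      intro s x
      induction x with
      | zero => simp
      | add x y hx hy => simp only [map_add, mul_add, hx, hy]
      | tmul c h =>
        induction s with
        | zero => simp
        | add x y hx hy => simp only [map_add, add_mul, hx, hy]
        | tmul d g => simp [E_mul_E Q hv hE]
    obtain ⟨m, rfl⟩ := hb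
    rw [key, Eid_coact_E Q hv hE]
  have h1 := Et_coact Q hv hE (a * b)
  rw [map_mul, hEb, coact_of_mem Q hv hE a ha, hx] at h1
  rw [← h1]
  simp only [map_sum, Finset.sum_mul]
  refine Finset.sum_congr rfl fun i _ => ?_
  have := E_mul_v_mul_E Q hv hE (E (v (x1 i) * a)) b (x2 i)
  rw [E_id Q hv hE b hb] at this
  simp [this]

/-- `p ⊗ q ⊗ r ↦ E(E(v(p) a) E(v(q) b)) v(r)`. -/
noncomputable def FF (E : B →ₗ[k] B) (v : H →ₐ[k] B) (a b : B) :
    H ⊗[k] (H ⊗[k] H) →ₗ[k] B :=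
  LinearMap.mul' k B ∘ₗ TensorProduct.map
    (E ∘ₗ LinearMap.mul' k B ∘ₗ TensorProduct.map
      (E ∘ₗ LinearMap.mulRight k a ∘ₗ v.toLinearMap)
      (E ∘ₗ LinearMap.mulRight k b ∘ₗ v.toLinearMap)) v.toLinearMap ∘ₗ
    (TensorProduct.assoc k H H H).symm.toLinearMap

@[simp] lemma FF_tmul (a b : B) (p q r : H) : FF E v a b (p ⊗ₜ[k] (q ⊗ₜ[k] r)) =
    E (E (v p * a) * E (v q * b)) * v r := rfl

lemma E_mul_eq (hv : IsComodAlgMorphismFromH R v) (hE : IsCanonicalProjection Q R v E)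
    (a b : B) (ha : a ∈ LinearMap.range E) (hb : b ∈ LinearMap.range E)
    (n : ℕ) (X1 X2 X3 : Fin n → H)
    (hX : Q.Phi = ∑ i, X1 i ⊗ₜ[k] (X2 i ⊗ₜ[k] X3 i)) :
    E (a * b) = ∑ i, E (v (X1 i) * a) * E (v (X2 i) * b) * v (X3 i) := by
  obtain ⟨m, x1, x2, x3, hx⟩ := exists_rep3 Q.PhiInv
  have h1 : FF E v a b (Q.PhiInv * Q.Phi) = E (a * b) := by
    rw [Q.inv_mul_Phi, Algebra.TensorProduct.one_def, Algebra.TensorProduct.one_def, FF_tmul,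
      map_one, one_mul, one_mul, mul_one, E_id Q hv hE a ha, E_id Q hv hE b hb]
  rw [← h1, hx, hX, Finset.mul_sum, map_sum]
  refine Finset.sum_congr rfl fun i _ => ?_
  rw [mul_eq Q hv hE _ _ ⟨_, rfl⟩ ⟨_, rfl⟩ m x1 x2 x3 hx]
  simp [Finset.sum_mul, E_mul_E Q hv hE, mul_assoc]

lemma assoc_eq (hv : IsComodAlgMorphismFromH R v) (hE : IsCanonicalProjection Q R v E)
    (a b c : B) (ha : a ∈ LinearMap.range E) (hb : b ∈ LinearMap.range E)
    (n : ℕ) (X1 X2 X3 : Fin n → H)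
    (hX : Q.Phi = ∑ i, X1 i ⊗ₜ[k] (X2 i ⊗ₜ[k] X3 i)) :
    E (E (a * b) * c)
          = ∑ i, E (E (v (X1 i) * a) * E (E (v (X2 i) * b) * E (v (X3 i) * c))) := by
  rw [E_mul_eq Q hv hE a b ha hb n X1 X2 X3 hX, Finset.sum_mul, map_sum]
  refine Finset.sum_congr rfl fun i _ => ?_
  rw [E_mul_E Q hv hE (E (v (X1 i) * a)), ← mul_assoc, E_mul_E Q hv hE, ← mul_assoc]

lemma v_mul_of_mem (hv : IsComodAlgMorphismFromH R v) (hE : IsCanonicalProjection Q R v E)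
    (h : H) (a : B) (ha : a ∈ LinearMap.range E) (n : ℕ) (d1 d2 : Fin n → H)
    (hd : Q.comul h = ∑ j, d1 j ⊗ₜ[k] d2 j) :
    v h * a = ∑ j, E (v (d1 j) * a) * v (d2 j) := by
  have := v_mul_E Q hv hE h a n d1 d2 hd
  rwa [E_id Q hv hE a ha] at this

lemma act_mul (hv : IsComodAlgMorphismFromH R v) (hE : IsCanonicalProjection Q R v E)
    (h : H) (a b : B) (ha : a ∈ LinearMap.range E) (n : ℕ) (d1 d2 : Fin n → H)
    (hd : Q.comul h = ∑ j, d1 j ⊗ₜ[k] d2 j) :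
    E (v h * E (a * b)) = ∑ j, E (E (v (d1 j) * a) * E (v (d2 j) * b)) := by
  rw [E_mul_E Q hv hE, ← mul_assoc, v_mul_of_mem Q hv hE h a ha n d1 d2 hd, Finset.sum_mul,
    map_sum]
  refine Finset.sum_congr rfl fun i _ => ?_
  rw [E_mul_E Q hv hE, mul_assoc]

@[simp] lemma smash_tmul (a : LinearMap.range E) (h : H) :
    smashToB E v (a ⊗ₜ[k] h) = (a : B) * v h := rfl

lemma smash_bijective (hv : IsComodAlgMorphismFromH R v) (hE : IsCanonicalProjection Q R v E)
    : Function.Bijective (smashToB E v) := by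
  constructor
  · have key : ∀ t, Eid H E (R.coact (smashToB E v t)) =
        LinearMap.rTensor H (LinearMap.range E).subtype t := by
      intro t
      induction t with
      | zero => simp
      | add x y hx hy => simp only [map_add, hx, hy]
      | tmul a h =>
        obtain ⟨a, m, rfl⟩ := a
        have h2 : ∀ s : B ⊗[k] H, Eid H E (s * (1 ⊗ₜ h)) = Eid H E s * (1 ⊗ₜ h) := by
          intro s
          induction s with
          | zero => simp
          | add x y hx hy => simp only [map_add, add_mul, hx, hy]
          | tmul p q => simp
        rw [smash_tmul, map_mul, Eid_mul_coact Q hv hE, h2, Eid_coact_E Q hv hE]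
        simp
    have hinj := Module.Flat.rTensor_preserves_injective_linearMap (M := H)
      (LinearMap.range E).subtype (Submodule.subtype_injective _)
    intro s t hst
    apply hinj
    rw [← key, ← key, hst]
  · intro b
    refine ⟨TensorProduct.map E.rangeRestrict LinearMap.id (R.coact b), ?_⟩
    have key : ∀ s : B ⊗[k] H, smashToB E v (TensorProduct.map E.rangeRestrict LinearMap.id s) =
        Et E v s := by
      intro s
      induction s with
      | zero => simp
      | add x y hx hy => simp only [map_add, hx, hy]
      | tmul p q => simp
    rw [key, Et_coact Q hv hE]

lemma smash_mul (hv : IsComodAlgMorphismFromH R v) (hE : IsCanonicalProjection Q R v E)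
    (a a' : B) (ha : a ∈ LinearMap.range E) (ha' : a' ∈ LinearMap.range E) (h h' : H)
    (n : ℕ) (x1 x2 x3 : Fin n → H)
    (hx : Q.PhiInv = ∑ i, x1 i ⊗ₜ[k] (x2 i ⊗ₜ[k] x3 i))
    (m : ℕ) (d1 d2 : Fin m → H) (hd : Q.comul h = ∑ j, d1 j ⊗ₜ[k] d2 j) :
    (∑ i, ∑ j, E (E (v (x1 i) * a) * E (v (x2 i * d1 j) * a')) * v (x3 i * d2 j * h'))
      = a * v h * (a' * v h') := by
  rw [← mul_assoc, mul_assoc a, v_mul_of_mem Q hv hE h a' ha' m d1 d2 hd, Finset.sum_comm,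
    Finset.mul_sum, Finset.sum_mul]
  refine Finset.sum_congr rfl fun j _ => ?_
  rw [← mul_assoc, mul_eq Q hv hE a _ ha ⟨_, rfl⟩ n x1 x2 x3 hx, Finset.sum_mul, Finset.sum_mul]
  refine Finset.sum_congr rfl fun i _ => ?_
  rw [E_mul_E Q hv hE (v (x2 i))]
  simp [mul_assoc]

lemma smash_coact (hv : IsComodAlgMorphismFromH R v) (hE : IsCanonicalProjection Q R v E)
    (a : B) (ha : a ∈ LinearMap.range E) (h : H)
    (n : ℕ) (x1 x2 x3 : Fin n → H)
    (hx : Q.PhiInv = ∑ i, x1 i ⊗ₜ[k] (x2 i ⊗ₜ[k] x3 i))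
    (m : ℕ) (d1 d2 : Fin m → H) (hd : Q.comul h = ∑ j, d1 j ⊗ₜ[k] d2 j) :
    R.coact (a * v h)
      = ∑ i, ∑ j, (E (v (x1 i) * a) * v (x2 i * d1 j)) ⊗ₜ[k] (x3 i * d2 j) := by
  rw [map_mul, coact_of_mem Q hv hE a ha, hx, hv.1, hd]
  simp only [map_sum, Finset.sum_mul, Finset.mul_sum]
  rw [Finset.sum_comm]
  simp [mul_assoc]

end comod
end QHA

/-- The structure theorem for quasi-Hopf comodule algebras: with `A = E(B)`,
`a * a' = E(aa')`, `1_A = 1_B` and `h ▷ a = E(v(h)a)`, the quadruple `(A, *, 1, ▷)` is a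
left `H`-module algebra, and `Ψ : A # H → B`, `Ψ(a # h) = a v(h)`, is an isomorphism of
right `H`-comodule algebras; in particular `B ≅ A # H`. -/
theorem statement4 {k H B : Type*} [Field k] [Ring H] [Algebra k H]
    [Ring B] [Algebra k B] (Q : QuasiHopfAlgebra k H)
    (R : RightComoduleAlgebra Q.toQuasiBialgebra B)
    (v : H →ₐ[k] B) (hv : IsComodAlgMorphismFromH R v)
    (E : B →ₗ[k] B) (hE : IsCanonicalProjection Q R v E) :
    -- `1_B ∈ A` and `(A, *, 1_B, ▷)` is a left `H`-module algebra:
    (E 1 = 1)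
    ∧ (∀ a ∈ LinearMap.range E, E (v 1 * a) = a)
    ∧ (∀ (g h : H), ∀ a ∈ LinearMap.range E, E (v (g * h) * a) = E (v g * E (v h * a)))
    ∧ (∀ a ∈ LinearMap.range E, E (a * 1) = a ∧ E ((1 : B) * a) = a)
    ∧ (∀ h : H, E (v h * 1) = Q.counit h • (1 : B))
    ∧ (∀ a ∈ LinearMap.range E, ∀ b ∈ LinearMap.range E, ∀ c ∈ LinearMap.range E,
        ∀ (n : ℕ) (X1 X2 X3 : Fin n → H),
        Q.Phi = ∑ i, X1 i ⊗ₜ[k] (X2 i ⊗ₜ[k] X3 i) →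
        E (E (a * b) * c)
          = ∑ i, E (E (v (X1 i) * a) * E (E (v (X2 i) * b) * E (v (X3 i) * c))))
    ∧ (∀ (h : H), ∀ a ∈ LinearMap.range E, ∀ b ∈ LinearMap.range E,
        ∀ (m : ℕ) (d1 d2 : Fin m → H),
        Q.comul h = ∑ j, d1 j ⊗ₜ[k] d2 j →
        E (v h * E (a * b)) = ∑ j, E (E (v (d1 j) * a) * E (v (d2 j) * b)))
    -- `Ψ` is an isomorphism of right `H`-comodule algebras:
    ∧ Function.Bijective (smashToB E v)
    ∧ (∀ a ∈ LinearMap.range E, ∀ a' ∈ LinearMap.range E, ∀ (h h' : H)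
        (n : ℕ) (x1 x2 x3 : Fin n → H),
        Q.PhiInv = ∑ i, x1 i ⊗ₜ[k] (x2 i ⊗ₜ[k] x3 i) →
        ∀ (m : ℕ) (d1 d2 : Fin m → H), Q.comul h = ∑ j, d1 j ⊗ₜ[k] d2 j →
        (∑ i, ∑ j, E (E (v (x1 i) * a) * E (v (x2 i * d1 j) * a'))
            * v (x3 i * d2 j * h'))
          = a * v h * (a' * v h'))
    ∧ (∀ a ∈ LinearMap.range E, ∀ (h : H) (n : ℕ) (x1 x2 x3 : Fin n → H),
        Q.PhiInv = ∑ i, x1 i ⊗ₜ[k] (x2 i ⊗ₜ[k] x3 i) →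
        ∀ (m : ℕ) (d1 d2 : Fin m → H), Q.comul h = ∑ j, d1 j ⊗ₜ[k] d2 j →
        R.coact (a * v h)
          = ∑ i, ∑ j, (E (v (x1 i) * a) * v (x2 i * d1 j)) ⊗ₜ[k] (x3 i * d2 j))
    ∧ R.PhiRho = (Algebra.TensorProduct.map v (AlgHom.id k (H ⊗[k] H))) Q.Phi := by
  refine ⟨QHA.E_one Q hv hE, ?_, ?_, ?_, ?_, ?_, ?_, QHA.smash_bijective Q hv hE, ?_, ?_, hv.2⟩
  · intro a ha
    rw [map_one, one_mul, QHA.E_id Q hv hE a ha]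
  · intro g h a _
    rw [QHA.E_mul_E Q hv hE, map_mul v, mul_assoc]
  · intro a ha
    rw [mul_one, one_mul]
    exact ⟨QHA.E_id Q hv hE a ha, QHA.E_id Q hv hE a ha⟩
  · intro h
    rw [mul_one, ← one_mul (v h), QHA.E_mul_v Q hv hE, QHA.E_one Q hv hE]
  · intro a ha b hb c _ n X1 X2 X3 hX
    exact QHA.assoc_eq Q hv hE a b c ha hb n X1 X2 X3 hX
  · intro h a ha b _ m d1 d2 hd
    exact QHA.act_mul Q hv hE h a b ha m d1 d2 hd
  · intro a ha a' ha' h h' n x1 x2 x3 hx m d1 d2 hd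
    exact QHA.smash_mul Q hv hE a a' ha ha' h h' n x1 x2 x3 hx m d1 d2 hd
  · intro a ha h n x1 x2 x3 hx m d1 d2 hd
    exact QHA.smash_coact Q hv hE a ha h n x1 x2 x3 hx m d1 d2 hd
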